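/- Assume the Gutiérrez conditions and let χ : ℝ² → {0,1} be measurable. Let M be a 2×2 real matrix with det(M) = 0 and let v : ℝ² → ℝ² be Lipschitz and ℤ²-periodic. Then the periodic cell energy is nonnegative: ∫_{[0,1)²} [χ(x)·Q₁(M + Dv(x)) + (1−χ(x))·Q₂(M + Dv(x))] dx ≥ 0. -/

import Mathlib

open MeasureTheory

/-- The isotropic elasticity quadratic form on 2×2 real matrices with Lamé
parameters `lam`, `mu`: `Q_{λ,μ}(A) = (λ+2μ)(A₁₁²+A₂₂²) + 2λA₁₁A₂₂ + μ(A₁₂+A₂₁)²`. -/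
def isoQ (lam mu : ℝ) (A : Matrix (Fin 2) (Fin 2) ℝ) : ℝ :=
  (lam + 2 * mu) * ((A 0 0) ^ 2 + (A 1 1) ^ 2) + 2 * lam * (A 0 0 * A 1 1)
    + mu * (A 0 1 + A 1 0) ^ 2

/-- The determinant of a 2×2 real matrix. -/
def det2 (A : Matrix (Fin 2) (Fin 2) ℝ) : ℝ := A 0 0 * A 1 1 - A 0 1 * A 1 0

/-- The Jacobian matrix of a map `v : ℝ² → ℝ²` at `x`: `(jac v x) i j = ∂ⱼ vⁱ (x)`.
(For a Lipschitz map this coincides a.e. with the total derivative, by Rademacher.) -/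
noncomputable def jac (v : (Fin 2 → ℝ) → (Fin 2 → ℝ)) (x : Fin 2 → ℝ) :
    Matrix (Fin 2) (Fin 2) ℝ :=
  Matrix.of fun i j => fderiv ℝ v x (Pi.single j 1) i

/-- `ℤ²`-periodicity of a map `ℝ² → ℝ²`. -/
def ZsqPeriodic (v : (Fin 2 → ℝ) → (Fin 2 → ℝ)) : Prop :=
  ∀ (x : Fin 2 → ℝ) (z : Fin 2 → ℤ), v (x + fun i => (z i : ℝ)) = v x

/-- The unit cell `[0,1)²`. -/
def unitCell : Set (Fin 2 → ℝ) := Set.univ.pi fun _ => Set.Ico (0 : ℝ) 1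

open Filter Topology
open scoped Pointwise

/-- A `ℤ²`-periodic scalar function. -/
def ScalarPeriodic (f : (Fin 2 → ℝ) → ℝ) : Prop :=
  ∀ (x : Fin 2 → ℝ) (z : Fin 2 → ℤ), f (x + fun i => (z i : ℝ)) = f x

theorem ScalarPeriodic.comp_add {f : (Fin 2 → ℝ) → ℝ} (hf : ScalarPeriodic f) (a : Fin 2 → ℝ) :
    ScalarPeriodic fun x => f (x + a) := fun x z => by
  simp only [add_right_comm x _ a]
  exact hf _ z

theorem ScalarPeriodic.mul {f g : (Fin 2 → ℝ) → ℝ} (hf : ScalarPeriodic f)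
    (hg : ScalarPeriodic g) : ScalarPeriodic fun x => f x * g x := fun x z => by
  simp only [hf x z, hg x z]

theorem ZsqPeriodic.component {v : (Fin 2 → ℝ) → (Fin 2 → ℝ)} (hv : ZsqPeriodic v) (i : Fin 2) :
    ScalarPeriodic fun x => v x i := fun x z => by
  simp only [hv x z]

/-- The integral of a periodic function over the unit cell is translation invariant. -/
theorem ScalarPeriodic.setIntegral_comp_add {f : (Fin 2 → ℝ) → ℝ} (hf : ScalarPeriodic f)
    (a : Fin 2 → ℝ) : ∫ x in unitCell, f (x + a) = ∫ x in unitCell, f x := by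
  have hdom : IsAddFundamentalDomain (Submodule.span ℤ (Set.range (Pi.basisFun ℝ (Fin 2)))).toAddSubgroup
      unitCell (volume : Measure (Fin 2 → ℝ)) := by
    rw [unitCell, ← ZSpan.fundamentalDomain_pi_basisFun]
    exact ZSpan.isAddFundamentalDomain' _ _
  have hper : ∀ (g : (Submodule.span ℤ (Set.range (Pi.basisFun ℝ (Fin 2)))).toAddSubgroup)
      (x : Fin 2 → ℝ), f (g +ᵥ x) = f x := by
    rintro ⟨g, hg⟩ x
    rw [Submodule.mem_toAddSubgroup, Module.Basis.mem_span_iff_repr_mem] at hg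
    choose z hz using hg
    have hgz : g = fun i => (z i : ℝ) := by
      ext i
      simpa using (hz i).symm
    change f (g + x) = f x
    rw [hgz, add_comm]
    exact hf x z
  have himage : (a +ᵥ unitCell : Set (Fin 2 → ℝ)) = (fun x => x + a) '' unitCell := by
    simp only [← Set.image_vadd, vadd_eq_add, add_comm a]
  have : Countable (Submodule.span ℤ (Set.range (Pi.basisFun ℝ (Fin 2)))).toAddSubgroup :=
    inferInstanceAs (Countable (Submodule.span ℤ (Set.range (Pi.basisFun ℝ (Fin 2)))))
  rw [hdom.setIntegral_eq (hdom.vadd_of_comm a) hper, himage,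
    (measurePreserving_add_right volume a).setIntegral_image_emb (measurableEmbedding_addRight a)]

theorem unitCell_volume_ne_top : volume unitCell ≠ ⊤ := by
  simp [unitCell, volume_pi, Measure.pi_pi]

theorem Continuous.integrableOn_unitCell {f : (Fin 2 → ℝ) → ℝ} (hf : Continuous f) :
    IntegrableOn f unitCell :=
  (hf.continuousOn.integrableOn_compact
    (isCompact_univ_pi fun _ => isCompact_Icc (a := (0 : ℝ)) (b := 1))).mono_set
    (Set.pi_mono fun _ _ => Set.Ico_subset_Icc_self)

theorem setIntegral_unitCell_add {f g : (Fin 2 → ℝ) → ℝ} (hf : Continuous f)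
    (hg : Continuous g) :
    ∫ x in unitCell, (f x + g x) = (∫ x in unitCell, f x) + ∫ x in unitCell, g x :=
  integral_add hf.integrableOn_unitCell hg.integrableOn_unitCell

theorem setIntegral_unitCell_sub {f g : (Fin 2 → ℝ) → ℝ} (hf : Continuous f)
    (hg : Continuous g) :
    ∫ x in unitCell, (f x - g x) = (∫ x in unitCell, f x) - ∫ x in unitCell, g x :=
  integral_sub hf.integrableOn_unitCell hg.integrableOn_unitCell

/-- Correlating two periodic functions only sees the difference of the translations. -/
theorem ScalarPeriodic.setIntegral_mul_shift {f g : (Fin 2 → ℝ) → ℝ} (hf : ScalarPeriodic f)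
    (hg : ScalarPeriodic g) (a b : Fin 2 → ℝ) :
    ∫ x in unitCell, f (x + a) * g (x + b) = ∫ x in unitCell, f x * g (x + (b - a)) := by
  rw [← (hf.mul (hg.comp_add (b - a))).setIntegral_comp_add a]
  congr! 3 with x
  abel_nf

theorem ScalarPeriodic.setIntegral_centralDiff {f : (Fin 2 → ℝ) → ℝ} (hf : ScalarPeriodic f)
    (hfc : Continuous f) (a : Fin 2 → ℝ) :
    ∫ x in unitCell, (f (x + a) - f (x - a)) = 0 := by
  simp only [sub_eq_add_neg _ a]
  rw [setIntegral_unitCell_sub (by fun_prop) (by fun_prop), hf.setIntegral_comp_add,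
    hf.setIntegral_comp_add, sub_self]

theorem ScalarPeriodic.setIntegral_centralDiff_mul {f g : (Fin 2 → ℝ) → ℝ}
    (hf : ScalarPeriodic f) (hg : ScalarPeriodic g) (hfc : Continuous f) (hgc : Continuous g)
    (a b : Fin 2 → ℝ) :
    ∫ x in unitCell, (f (x + a) - f (x - a)) * (g (x + b) - g (x - b)) =
      (∫ x in unitCell, f x * g (x + (b - a))) - (∫ x in unitCell, f x * g (x + (-b - a)))
        - (∫ x in unitCell, f x * g (x + (b - -a)))
        + ∫ x in unitCell, f x * g (x + (-b - -a)) := by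
  have hexp : ∀ x, (f (x + a) - f (x - a)) * (g (x + b) - g (x - b)) =
      f (x + a) * g (x + b) - f (x + a) * g (x + -b) - f (x + -a) * g (x + b)
        + f (x + -a) * g (x + -b) := fun x => by
    simp only [sub_eq_add_neg]
    ring
  simp only [hexp, ← hf.setIntegral_mul_shift hg]
  rw [setIntegral_unitCell_add, setIntegral_unitCell_sub, setIntegral_unitCell_sub]
  all_goals fun_prop

theorem ScalarPeriodic.setIntegral_centralDiff_mul_swap {f g : (Fin 2 → ℝ) → ℝ}
    (hf : ScalarPeriodic f) (hg : ScalarPeriodic g) (hfc : Continuous f) (hgc : Continuous g)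
    (a b : Fin 2 → ℝ) :
    ∫ x in unitCell, (f (x + a) - f (x - a)) * (g (x + b) - g (x - b)) =
      ∫ x in unitCell, (f (x + b) - f (x - b)) * (g (x + a) - g (x - a)) := by
  rw [hf.setIntegral_centralDiff_mul hg hfc hgc, hf.setIntegral_centralDiff_mul hg hfc hgc,
    show -b - -a = a - b by abel, show -a - -b = b - a by abel, show -b - a = -a - b by abel,
    show b - -a = a - -b by abel]
  ring

/-- The central-difference approximation with step `h` of the Jacobian matrix. -/
noncomputable def diffJac (v : (Fin 2 → ℝ) → (Fin 2 → ℝ)) (h : ℝ) (x : Fin 2 → ℝ) :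
    Matrix (Fin 2) (Fin 2) ℝ :=
  Matrix.of fun i j => (2 * h)⁻¹ * (v (x + h • Pi.single j 1) i - v (x - h • Pi.single j 1) i)

theorem continuous_diffJac_apply {v : (Fin 2 → ℝ) → (Fin 2 → ℝ)} (hv : Continuous v) (h : ℝ)
    (i j : Fin 2) : Continuous fun x => diffJac v h x i j := by
  simp only [diffJac, Matrix.of_apply]
  fun_prop

theorem abs_diffJac_apply_le {v : (Fin 2 → ℝ) → (Fin 2 → ℝ)} {K : NNReal}
    (hv : LipschitzWith K v) {h : ℝ} (hh : 0 < h) (x : Fin 2 → ℝ) (i j : Fin 2) :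
    |diffJac v h x i j| ≤ K := by
  have hle : |v (x + h • Pi.single j 1) i - v (x - h • Pi.single j 1) i| ≤ K * (2 * h) := by
    have hnorm := hv.norm_sub_le (x + h • Pi.single j 1) (x - h • Pi.single j 1)
    rw [add_sub_sub_cancel, ← two_smul ℝ, smul_smul, norm_smul, Pi.norm_single, norm_one, mul_one,
      Real.norm_of_nonneg (by positivity)] at hnorm
    exact (norm_le_pi_norm (v (x + h • Pi.single j 1) - v (x - h • Pi.single j 1)) i).trans hnorm
  rw [diffJac, Matrix.of_apply, abs_mul, abs_of_pos (by positivity : 0 < (2 * h)⁻¹),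
    inv_mul_le_iff₀ (by positivity)]
  linarith

theorem abs_jac_apply_le {v : (Fin 2 → ℝ) → (Fin 2 → ℝ)} {K : NNReal}
    (hv : LipschitzWith K v) (x : Fin 2 → ℝ) (i j : Fin 2) : |jac v x i j| ≤ K := by
  have hnorm := (fderiv ℝ v x).le_of_opNorm_le (norm_fderiv_le_of_lipschitz ℝ hv)
    (Pi.single j 1)
  rw [Pi.norm_single, norm_one, mul_one] at hnorm
  exact (norm_le_pi_norm _ i).trans hnorm

theorem measurable_jac_apply (v : (Fin 2 → ℝ) → (Fin 2 → ℝ)) (i j : Fin 2) :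
    Measurable fun x => jac v x i j :=
  (measurable_pi_apply i).comp (measurable_fderiv_apply_const ℝ v (Pi.single j 1))

theorem tendsto_diffJac_apply {v : (Fin 2 → ℝ) → (Fin 2 → ℝ)} {x : Fin 2 → ℝ}
    (hv : DifferentiableAt ℝ v x) (i j : Fin 2) :
    Tendsto (fun h => diffJac v h x i j) (𝓝[≠] 0) (𝓝 (jac v x i j)) := by
  have hline : HasDerivAt (fun t : ℝ => v (x + t • Pi.single j 1) i) (jac v x i j) 0 :=
    hasDerivAt_pi.1 (hv.hasFDerivAt.hasLineDerivAt (Pi.single j 1)) i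
  have hneg : HasDerivAt (fun t : ℝ => v (x + (-t) • Pi.single j 1) i) (-jac v x i j) 0 := by
    have hcomp := HasDerivAt.comp (0 : ℝ) (h := fun t : ℝ => -t) (by simpa using hline)
      (hasDerivAt_neg 0)
    simpa [Function.comp_def] using hcomp
  have hslope := ((hline.sub hneg).const_mul (2⁻¹ : ℝ)).tendsto_slope_zero
  convert hslope using 2 with h
  · simp [diffJac, sub_eq_add_neg]
    ring
  · ring

theorem abs_det2_le {A : Matrix (Fin 2) (Fin 2) ℝ} {C : ℝ} (hA : ∀ i j, |A i j| ≤ C) :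
    |det2 A| ≤ 2 * C ^ 2 := by
  have hmul : ∀ i j k l, |A i j * A k l| ≤ C ^ 2 := fun i j k l => by
    rw [abs_mul, sq]
    exact mul_le_mul (hA i j) (hA k l) (abs_nonneg _) ((abs_nonneg _).trans (hA i j))
  have h₁ := abs_le.1 (hmul 0 0 1 1)
  have h₂ := abs_le.1 (hmul 0 1 1 0)
  rw [det2, abs_le]
  constructor <;> linarith

/-- Central differences of a periodic map have zero average determinant. -/
theorem setIntegral_det2_add_diffJac {v : (Fin 2 → ℝ) → (Fin 2 → ℝ)} (hv : Continuous v)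
    (hper : ZsqPeriodic v) {M : Matrix (Fin 2) (Fin 2) ℝ} (hM : det2 M = 0) (h : ℝ) :
    ∫ x in unitCell, det2 (M + diffJac v h x) = 0 := by
  have hc := continuous_diffJac_apply hv h
  have hcomp : ∀ i, Continuous fun x => v x i := fun i => by fun_prop
  have hzero : ∀ i j, ∫ x in unitCell, diffJac v h x i j = 0 := fun i j => by
    simp only [diffJac, Matrix.of_apply]
    rw [integral_const_mul, (hper.component i).setIntegral_centralDiff (hcomp i), mul_zero]
  have hswap : ∫ x in unitCell, diffJac v h x 0 0 * diffJac v h x 1 1 =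
      ∫ x in unitCell, diffJac v h x 0 1 * diffJac v h x 1 0 := by
    simp only [diffJac, Matrix.of_apply]
    simp_rw [fun p q : ℝ => mul_mul_mul_comm (2 * h)⁻¹ p (2 * h)⁻¹ q]
    rw [integral_const_mul, integral_const_mul,
      (hper.component 0).setIntegral_centralDiff_mul_swap (hper.component 1) (hcomp 0) (hcomp 1)]
  have hexp : ∀ x, det2 (M + diffJac v h x) =
      (M 0 0 * diffJac v h x 1 1 + M 1 1 * diffJac v h x 0 0)
        - (M 0 1 * diffJac v h x 1 0 + M 1 0 * diffJac v h x 0 1)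
        + (diffJac v h x 0 0 * diffJac v h x 1 1 - diffJac v h x 0 1 * diffJac v h x 1 0) :=
    fun x => by
      simp only [det2, Matrix.add_apply] at hM ⊢
      linear_combination hM
  simp only [hexp]
  rw [setIntegral_unitCell_add, setIntegral_unitCell_sub, setIntegral_unitCell_add,
    setIntegral_unitCell_add, setIntegral_unitCell_sub, hswap]
  · simp only [integral_const_mul, hzero]
    ring
  all_goals fun_prop

theorem abs_add_apply_le {M A : Matrix (Fin 2) (Fin 2) ℝ} {K : ℝ} (hA : ∀ i j, |A i j| ≤ K)
    (i j : Fin 2) : |(M + A) i j| ≤ (∑ k, ∑ l, |M k l|) + K := by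
  have hM : |M i j| ≤ ∑ k, ∑ l, |M k l| :=
    (Finset.single_le_sum (f := fun l => |M i l|) (fun _ _ => abs_nonneg _)
      (Finset.mem_univ j)).trans
    (Finset.single_le_sum (f := fun k => ∑ l, |M k l|)
      (fun _ _ => Finset.sum_nonneg fun _ _ => abs_nonneg _) (Finset.mem_univ i))
  exact (abs_add_le _ _).trans (add_le_add hM (hA i j))

theorem integrableOn_det2_add_jac {v : (Fin 2 → ℝ) → (Fin 2 → ℝ)} {K : NNReal}
    (hv : LipschitzWith K v) (M : Matrix (Fin 2) (Fin 2) ℝ) :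
    IntegrableOn (fun x => det2 (M + jac v x)) unitCell := by
  have hmeas : Measurable fun x => det2 (M + jac v x) := by
    have hj := measurable_jac_apply v
    simp only [det2, Matrix.add_apply]
    exact (((hj 0 0).const_add _).mul ((hj 1 1).const_add _)).sub
      (((hj 0 1).const_add _).mul ((hj 1 0).const_add _))
  exact Measure.integrableOn_of_bounded unitCell_volume_ne_top hmeas.aestronglyMeasurable
    (ae_of_all _ fun x => abs_det2_le (abs_add_apply_le (abs_jac_apply_le hv x)))

/-- The determinant is a null Lagrangian for Lipschitz periodic perturbations. -/
theorem setIntegral_det2_add_jac {v : (Fin 2 → ℝ) → (Fin 2 → ℝ)} {K : NNReal}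
    (hv : LipschitzWith K v) (hper : ZsqPeriodic v) {M : Matrix (Fin 2) (Fin 2) ℝ}
    (hM : det2 M = 0) : ∫ x in unitCell, det2 (M + jac v x) = 0 := by
  have hlim : Tendsto (fun h => ∫ x in unitCell, det2 (M + diffJac v h x)) (𝓝[>] 0)
      (𝓝 (∫ x in unitCell, det2 (M + jac v x))) := by
    refine tendsto_integral_filter_of_dominated_convergence
      (fun _ => 2 * ((∑ k, ∑ l, |M k l|) + K) ^ 2) ?_ ?_ ?_ ?_
    · refine Eventually.of_forall fun h => Continuous.aestronglyMeasurable ?_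
      have hc := continuous_diffJac_apply hv.continuous h
      simp only [det2, Matrix.add_apply]
      exact ((continuous_const.add (hc 0 0)).mul (continuous_const.add (hc 1 1))).sub
        ((continuous_const.add (hc 0 1)).mul (continuous_const.add (hc 1 0)))
    · filter_upwards [self_mem_nhdsWithin] with h hh
      exact ae_of_all _ fun x => abs_det2_le (abs_add_apply_le (abs_diffJac_apply_le hv hh x))
    · exact integrableOn_const unitCell_volume_ne_top
    · filter_upwards [ae_restrict_of_ae hv.ae_differentiableAt] with x hx
      have ht : ∀ i j, Tendsto (fun h => M i j + diffJac v h x i j) (𝓝[>] 0)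
          (𝓝 (M i j + jac v x i j)) := fun i j =>
        ((tendsto_diffJac_apply hx i j).mono_left
          (nhdsWithin_mono _ fun _ hh => ne_of_gt hh)).const_add _
      simp only [det2, Matrix.add_apply]
      exact ((ht 0 0).mul (ht 1 1)).sub ((ht 0 1).mul (ht 1 0))
  simp only [setIntegral_det2_add_diffJac hv.continuous hper hM] at hlim
  exact (tendsto_nhds_unique hlim tendsto_const_nhds)

theorem isoQ_add_det2_nonneg_of_add_nonneg {lam mu : ℝ} (hmu : 0 ≤ mu) (hsum : 0 ≤ lam + mu)
    (A : Matrix (Fin 2) (Fin 2) ℝ) : 0 ≤ isoQ lam mu A + 4 * mu * det2 A := by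
  have hid : isoQ lam mu A + 4 * mu * det2 A =
      (lam + mu) * (A 0 0 + A 1 1) ^ 2
        + mu * ((A 0 0 + A 1 1) ^ 2 + (A 0 1 - A 1 0) ^ 2) := by
    rw [isoQ, det2]
    ring
  rw [hid]
  positivity

theorem isoQ_add_det2_nonneg_of_add_nonpos {lam mu : ℝ} (hsum : lam + mu ≤ 0)
    (hmu : -(lam + mu) ≤ mu) (A : Matrix (Fin 2) (Fin 2) ℝ) :
    0 ≤ isoQ lam mu A + 4 * -(lam + mu) * det2 A := by
  have hid : isoQ lam mu A + 4 * -(lam + mu) * det2 A =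
      (mu - -(lam + mu)) * ((A 0 0 - A 1 1) ^ 2 + (A 0 1 + A 1 0) ^ 2)
        + -(lam + mu) * (A 0 1 - A 1 0) ^ 2 := by
    rw [isoQ, det2]
    ring
  have h₁ : 0 ≤ mu - -(lam + mu) := sub_nonneg.2 hmu
  have h₂ : 0 ≤ -(lam + mu) := neg_nonneg.2 hsum
  rw [hid]
  positivity

theorem stmt_10 (lam1 mu1 lam2 mu2 : ℝ)
    (h1 : 0 < mu1) (h2 : mu1 = -(lam2 + mu2)) (h3 : mu1 < mu2)
    (h4 : 0 < lam1 + mu1)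
    (χ : (Fin 2 → ℝ) → ℝ) (hχmeas : Measurable χ) (hχ : ∀ x, χ x = 0 ∨ χ x = 1)
    (M : Matrix (Fin 2) (Fin 2) ℝ) (hM : det2 M = 0)
    (v : (Fin 2 → ℝ) → (Fin 2 → ℝ)) (K : NNReal)
    (hlip : LipschitzWith K v) (hper : ZsqPeriodic v) :
    0 ≤ ∫ x in unitCell,
      (χ x * isoQ lam1 mu1 (M + jac v x)
        + (1 - χ x) * isoQ lam2 mu2 (M + jac v x)) := by
  by_cases hint : IntegrableOn (fun x => χ x * isoQ lam1 mu1 (M + jac v x)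
        + (1 - χ x) * isoQ lam2 mu2 (M + jac v x)) unitCell
  · have hnull : ∫ x in unitCell, -(4 * mu1) * det2 (M + jac v x) = 0 := by
      rw [integral_const_mul, setIntegral_det2_add_jac hlip hper hM, mul_zero]
    rw [← hnull]
    refine integral_mono ((integrableOn_det2_add_jac hlip M).const_mul _) hint fun x => ?_
    have hq₁ := isoQ_add_det2_nonneg_of_add_nonneg h1.le h4.le (M + jac v x)
    have hq₂ := isoQ_add_det2_nonneg_of_add_nonpos (lam := lam2) (mu := mu2) (by linarith)
      (by linarith) (M + jac v x)
    rw [← h2] at hq₂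
    rcases hχ x with hx | hx <;> simp only [hx] <;> linarith
  · exact (integral_undef hint).ge
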